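/- Let g, h be F-algebra automorphisms of D such that g ∘ σᵢ = σᵢ ∘ h for i = 1,2 and g ∘ σᵢ⁻¹ = σᵢ⁻¹ ∘ h for i = 3,4, and let b ∈ F with b ≠ 0 satisfy g(c) = b²·c. Then the map G : D × D → D × D defined by G(u,v) = (g(u), h(v)·b) is an F-algebra automorphism of Cay(D,c,σ₁,σ₂,σ₃,σ₄); in particular G is bijective, F-linear, and G((u,v)·(x,y)) = G(u,v)·G(x,y) for all u, v, x, y ∈ D. -/

import Mathlib

/-- Multiplication of the generalized Cayley–Dickson double
`Cay(D, c, σ₁, σ₂, σ₃, σ₄)`: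
`(u,v)·(x,y) = (u·x + c·σ₁(v)·σ₂(y), σ₃(u)·y + v·σ₄(x))`. -/
def cayMul {R : Type*} [Ring R] (c : R) (σ₁ σ₂ σ₃ σ₄ : R → R) :
    R × R → R × R → R × R :=
  fun p q => (p.1 * q.1 + c * σ₁ p.2 * σ₂ q.2, σ₃ p.1 * q.2 + p.2 * σ₄ q.1)

/-!
For `i = 3, 4`, substituting `σᵢ(x)` for `x` in `g ∘ σᵢ⁻¹ = σᵢ⁻¹ ∘ h` gives `h ∘ σᵢ = σᵢ ∘ g`. The
term `c·σ₁(v)·σ₂(y)` of a product is quadratic in the second coordinates, so `G` scales it by `b²`,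
which `g(c) = b²·c` accounts for; the terms `σ₃(u)·y` and `v·σ₄(x)` are linear in them, so a single
factor `b` comes out.
-/

theorem map_apply_eq_of_map_symm_apply_eq {α β γ δ : Type*} {σ : α ≃ β} {τ : γ ≃ δ}
    {g : α → γ} {h : β → δ} (hgh : ∀ y, g (σ.symm y) = τ.symm (h y)) (x : α) :
    h (σ x) = τ (g x) := by
  rw [← τ.symm_apply_eq, ← hgh, σ.symm_apply_apply]

section CayMap

variable {R A B : Type*} [CommSemiring R] [Ring A] [Ring B] [Algebra R A] [Algebra R B]

/-- The map `(u, v) ↦ (g u, b • h v)` between the spaces underlying two generalized Cayley–Dickson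
doubles. The paper's right factor `h(v)·b` is a scalar action here because `b` is central. -/
def cayMap (g h : A →ₗ[R] B) (b : R) : A × A →ₗ[R] B × B :=
  g.prodMap (b • h)

theorem cayMap_bijective {g h : A →ₗ[R] B} {b : R} (hg : Function.Bijective g)
    (hh : Function.Bijective h) (hb : IsUnit b) : Function.Bijective (cayMap g h b) :=
  hg.prodMap (hb.smul_bijective.comp hh)

theorem cayMap_cayMul {T : Type*} [FunLike T B B] [MulActionHomClass T R B B]
    {σ₁ σ₂ σ₃ σ₄ : A → A} {τ₁ τ₂ : T} {τ₃ τ₄ : B → B} {c : A} {d : B} (g h : A →ₐ[R] B) {b : R}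
    (h₁ : ∀ x, g (σ₁ x) = τ₁ (h x)) (h₂ : ∀ x, g (σ₂ x) = τ₂ (h x))
    (h₃ : ∀ x, h (σ₃ x) = τ₃ (g x)) (h₄ : ∀ x, h (σ₄ x) = τ₄ (g x))
    (hc : g c = b ^ 2 • d) (p q : A × A) :
    cayMap g.toLinearMap h.toLinearMap b (cayMul c σ₁ σ₂ σ₃ σ₄ p q) =
      cayMul d τ₁ τ₂ τ₃ τ₄ (cayMap g.toLinearMap h.toLinearMap b p)
        (cayMap g.toLinearMap h.toLinearMap b q) := by
  obtain ⟨u, v⟩ := p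
  obtain ⟨x, y⟩ := q
  refine Prod.ext ?_ ?_
  · calc g (u * x + c * σ₁ v * σ₂ y)
        = g u * g x + b ^ 2 • d * τ₁ (h v) * τ₂ (h y) := by
          simp only [map_add, map_mul, h₁, h₂, hc]
      _ = g u * g x + d * τ₁ (b • h v) * τ₂ (b • h y) := by
          simp only [map_smul, smul_mul_assoc, mul_smul_comm, smul_smul, pow_two]
  · calc b • h (σ₃ u * y + v * σ₄ x)
        = b • (τ₃ (g u) * h y + h v * τ₄ (g x)) := by
          simp only [map_add, map_mul, h₃, h₄]
      _ = τ₃ (g u) * (b • h y) + (b • h v) * τ₄ (g x) := by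
          rw [smul_add, mul_smul_comm, smul_mul_assoc]

theorem cay_central_division_algebra_automorphism_construction_general
    {T : Type*} [FunLike T B B] [MulActionHomClass T R B B]
    (σ₁ σ₂ σ₃ σ₄ : A → A) (τ₁ τ₂ : T) (τ₃ τ₄ : B → B) (c : A) (d : B) (g h : A ≃ₐ[R] B)
    (h₁ : ∀ x, g (σ₁ x) = τ₁ (h x)) (h₂ : ∀ x, g (σ₂ x) = τ₂ (h x))
    (h₃ : ∀ x, h (σ₃ x) = τ₃ (g x)) (h₄ : ∀ x, h (σ₄ x) = τ₄ (g x))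
    (b : R) (hb : IsUnit b) (hbc : g c = algebraMap R B (b ^ 2) * d)
    (G : A × A → B × B) (hG : ∀ u v : A, G (u, v) = (g u, h v * algebraMap R B b)) :
    Function.Bijective G ∧
    (∀ p q : A × A, G (p + q) = G p + G q) ∧
    (∀ (α : R) (p : A × A), G (α • p) = α • G p) ∧
    (∀ p q : A × A, G (cayMul c σ₁ σ₂ σ₃ σ₄ p q) = cayMul d τ₁ τ₂ τ₃ τ₄ (G p) (G q)) := by
  have G_eq : G = cayMap g.toLinearMap h.toLinearMap b := by
    funext ⟨u, v⟩
    rw [hG, ← Algebra.commutes, ← Algebra.smul_def]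
    rfl
  rw [← Algebra.smul_def] at hbc
  subst G_eq
  exact ⟨cayMap_bijective g.bijective h.bijective hb, map_add _, map_smul _,
    cayMap_cayMul (g : A →ₐ[R] B) (h : A →ₐ[R] B) h₁ h₂ h₃ h₄ hbc⟩

end CayMap

/-- If `g, h ∈ Aut_F(D)` satisfy `g∘σᵢ = σᵢ∘h` (i = 1,2),
`g∘σᵢ⁻¹ = σᵢ⁻¹∘h` (i = 3,4), and `b ∈ F⁎` satisfies `g(c) = b²·c`, then
`G(u,v) = (g(u), h(v)·b)` is an `F`-algebra automorphism of `Cay(D,c,σ₁,σ₂,σ₃,σ₄)`. -/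
theorem cay_central_division_algebra_automorphism_construction
    {F D : Type*} [Field F] [DivisionRing D] [Algebra F D]
    [FiniteDimensional F D] [Algebra.IsCentral F D]
    (σ₁ σ₂ σ₃ σ₄ : D ≃ₐ[F] D) (c : D) (hc : c ≠ 0)
    (g h : D ≃ₐ[F] D)
    (h1 : ∀ x : D, g (σ₁ x) = σ₁ (h x))
    (h2 : ∀ x : D, g (σ₂ x) = σ₂ (h x))
    (h3 : ∀ x : D, g (σ₃.symm x) = σ₃.symm (h x))
    (h4 : ∀ x : D, g (σ₄.symm x) = σ₄.symm (h x))
    (b : F) (hb : b ≠ 0) (hbc : g c = algebraMap F D (b ^ 2) * c)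
    (G : D × D → D × D) (hG : ∀ u v : D, G (u, v) = (g u, h v * algebraMap F D b)) :
    Function.Bijective G ∧
    (∀ p q : D × D, G (p + q) = G p + G q) ∧
    (∀ (α : F) (p : D × D), G (α • p) = α • G p) ∧
    (∀ p q : D × D, G (cayMul c σ₁ σ₂ σ₃ σ₄ p q) = cayMul c σ₁ σ₂ σ₃ σ₄ (G p) (G q)) :=
  cay_central_division_algebra_automorphism_construction_general
    σ₁ σ₂ σ₃ σ₄ σ₁ σ₂ σ₃ σ₄ c c g h h1 h2
    (map_apply_eq_of_map_symm_apply_eq (σ := σ₃.toEquiv) (τ := σ₃.toEquiv) h3)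
    (map_apply_eq_of_map_symm_apply_eq (σ := σ₄.toEquiv) (τ := σ₄.toEquiv) h4)
    b hb.isUnit hbc G hG
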